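/- Suppose the distributional preference ≿ satisfies the upper-bound property and the maximizer property. Then for every S ⊆ 𝒮, the frontier F(S) is nonempty and satisfies the matroid basis-exchange axiom: for all B, B' ∈ F(S) and every b ∈ B \ B', there exists b' ∈ B' \ B such that (B \ {b}) ∪ {b'} ∈ F(S). Hence F(S) forms the collection of bases of a matroid with ground set S. -/

import Mathlib

open Finset

variable {α : Type*}

/-- Strict part of a distributional preference. -/
def strictPref (pref : Finset α → Finset α → Prop) (A B : Finset α) : Prop :=
  pref A B ∧ ¬ pref B A

/-- Indifference part of a distributional preference. -/
def indiffPref (pref : Finset α → Finset α → Prop) (A B : Finset α) : Prop :=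
  pref A B ∧ pref B A

/-- Incomparability under a distributional preference. -/
def incomparable (pref : Finset α → Finset α → Prop) (A B : Finset α) : Prop :=
  ¬ pref A B ∧ ¬ pref B A

/-- `NW q S` is the collection of non-wasteful subsets of `S`. -/
def NW (q : ℕ) (S : Finset α) : Set (Finset α) :=
  {T | T ⊆ S ∧ T.card = min q S.card}

/-- The frontier of `S`: non-wasteful subsets undominated w.r.t. the preference. -/
def frontierSet (pref : Finset α → Finset α → Prop) (q : ℕ) (S : Finset α) :
    Set (Finset α) :=
  {T | T ∈ NW q S ∧ ∀ T' ∈ NW q S, ¬ strictPref pref T' T}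

/-- The upper-bound property of a distributional preference. -/
def upperBoundProperty [DecidableEq α] (pref : Finset α → Finset α → Prop) (q : ℕ) : Prop :=
  ∀ S S' : Finset α, S.card = q → S'.card = q → incomparable pref S S' →
    ∃ S'' ∈ NW q (S ∪ S'), strictPref pref S'' S ∨ strictPref pref S'' S'

/-- The maximizer property of a distributional preference. -/
def maximizerProperty [DecidableEq α] (pref : Finset α → Finset α → Prop) (q : ℕ) : Prop :=
  ∀ S S' : Finset α, S ≠ S' → S.card = q → S'.card = q →
    (∀ S'' ∈ NW q (S ∪ S'), pref S S'' ∧ pref S' S'') →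
    ∃ s ∈ S \ S', ∃ s' ∈ S' \ S,
      indiffPref pref (S.erase s ∪ {s'}) S ∧ indiffPref pref (S'.erase s' ∪ {s}) S'

/-- The improvement property of a distributional preference. -/
def improvementProperty [DecidableEq α] (pref : Finset α → Finset α → Prop) (q : ℕ) : Prop :=
  ∀ S S' : Finset α, S.card = q → S'.card = q → ∀ s ∈ S \ S',
    (∀ S'' ∈ NW q (S ∪ S'), s ∉ S'' → strictPref pref S S'') →
    (∀ S'' ∈ NW q (S ∪ S'), s ∈ S'' → pref S S'') →
    ∃ s' ∈ S' \ S, strictPref pref (S'.erase s' ∪ {s}) S'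

/-- A choice rule is non-wasteful. -/
def nonWasteful (q : ℕ) (Ch : Finset α → Finset α) : Prop :=
  ∀ S : Finset α, (Ch S).card = min q S.card

/-- A choice rule promotes the distributional preference. -/
def promotesPref (pref : Finset α → Finset α → Prop) (Ch : Finset α → Finset α) : Prop :=
  ∀ S : Finset α, ∀ S' ⊆ S, S'.card = (Ch S).card → ¬ strictPref pref S' (Ch S)

/-- A choice rule guarantees no justified envy with respect to priority ranking `π`. -/
def noJustifiedEnvy [DecidableEq α] (pref : Finset α → Finset α → Prop)
    (π : α → α → Prop) (Ch : Finset α → Finset α) : Prop :=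
  ∀ S : Finset α, ∀ s ∈ Ch S, ∀ s' ∈ S \ Ch S,
    pref ((Ch S).erase s ∪ {s'}) (Ch S) → π s s'

/-- Path independence of a choice rule. -/
def pathIndependent [DecidableEq α] (Ch : Finset α → Finset α) : Prop :=
  ∀ S S' : Finset α, Ch (S ∪ S') = Ch (Ch S ∪ S')

/-- Consistency of a choice rule. -/
def consistentRule [DecidableEq α] (Ch : Finset α → Finset α) : Prop :=
  ∀ S : Finset α, ∀ s ∈ S, s ∉ Ch S → Ch (S.erase s) = Ch S

/-- Substitutability of a choice rule. -/
def substitutableRule [DecidableEq α] (Ch : Finset α → Finset α) : Prop :=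
  ∀ S : Finset α, ∀ s ∈ S, ∀ s' ∈ S, s ≠ s' → s ∈ Ch S → s ∈ Ch (S.erase s')

/-- `l` lists the elements of `A` in strictly decreasing `π`-priority. -/
def descList [DecidableEq α] (π : α → α → Prop) (A : Finset α) (l : List α) : Prop :=
  l.Pairwise π ∧ l.Nodup ∧ l.toFinset = A

/-- `A` priority dominates `B` with respect to `π`. -/
def priorityDominates [DecidableEq α] (π : α → α → Prop) (A B : Finset α) : Prop :=
  B.card ≤ A.card ∧
  ∀ la lb : List α, descList π A la → descList π B lb →
    ∀ (k : ℕ) (ha : k < la.length) (hb : k < lb.length),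
      la.get ⟨k, ha⟩ = lb.get ⟨k, hb⟩ ∨ π (la.get ⟨k, ha⟩) (lb.get ⟨k, hb⟩)

/-- The revealed preference axiom for a choice rule: no revealed-priority cycles. -/
def revealedPrefAxiom [DecidableEq α] (pref : Finset α → Finset α → Prop)
    (Ch : Finset α → Finset α) : Prop :=
  ¬ ∃ (K : ℕ) (s : ℕ → α) (T : ℕ → Finset α), 0 < K ∧ s K = s 0 ∧
    ∀ k < K, s k ∈ Ch (T k) ∧ s (k + 1) ∈ T k \ Ch (T k) ∧
      pref ((Ch (T k)).erase (s k) ∪ {s (k + 1)}) (Ch (T k))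

/-- Weak symmetric exchange implies the basis-exchange axiom. -/
theorem weak_exchange {α : Type*} [DecidableEq α] (F : Set (Finset α))
    (hw : ∀ B ∈ F, ∀ B' ∈ F, B ≠ B' → ∃ s ∈ B \ B', ∃ s' ∈ B' \ B,
      (B.erase s ∪ {s'}) ∈ F ∧ (B'.erase s' ∪ {s}) ∈ F) (n : ℕ) :
    ∀ B ∈ F, ∀ B' ∈ F, (B \ B').card ≤ n → ∀ b ∈ B \ B',
      ∃ b' ∈ B' \ B, (B.erase b ∪ {b'}) ∈ F := by
  induction n with
  | zero =>
    intro B _ B' _ hc b hb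
    have : (B \ B') = ∅ := by simpa using hc
    simp [this] at hb
  | succ n ih =>
    intro B hB B' hB' hc b hb
    have hne : B ≠ B' := by
      rintro rfl
      simp at hb
    obtain ⟨s, hs, s', hs', h1, h2⟩ := hw B hB B' hB' hne
    by_cases hsb : s = b
    · subst hsb
      exact ⟨s', hs', h1⟩
    · have e : B \ (B'.erase s' ∪ {s}) = (B \ B').erase s := by
        ext x
        simp only [mem_sdiff, mem_union, mem_erase, mem_singleton] at *
        grind
      obtain ⟨b', hb', h⟩ := ih B hB _ h2
        (by rw [e, card_erase_of_mem hs]; omega) b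
        (by rw [e]; exact mem_erase.2 ⟨fun h => hsb h.symm, hb⟩)
      refine ⟨b', ?_, h⟩
      simp only [mem_sdiff, mem_union, mem_erase, mem_singleton] at *
      grind

/-- Every non-wasteful set is weakly dominated by a frontier element. -/
theorem exists_frontier_above {α : Type*} [Fintype α] [DecidableEq α] (q : ℕ)
    (pref : Finset α → Finset α → Prop)
    (hrefl : ∀ A : Finset α, pref A A)
    (htrans : ∀ A B C : Finset α, pref A B → pref B C → pref A C)
    (S T : Finset α) (hT : T ∈ NW q S) :
    ∃ T' ∈ frontierSet pref q S, pref T' T := by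
  let R : Finset α → Finset α → Prop := fun A B => strictPref pref A B
  have : IsTrans (Finset α) R := ⟨fun A B C h h' =>
    ⟨htrans _ _ _ h.1 h'.1, fun h'' => h.2 (htrans _ _ _ h'.1 h'')⟩⟩
  have : Std.Irrefl R := ⟨fun A h => h.2 h.1⟩
  have wf : WellFounded R := Finite.wellFounded_of_trans_of_irrefl R
  obtain ⟨m, ⟨hm1, hm2⟩, hmin⟩ := wf.has_min {A | A ∈ NW q S ∧ pref A T} ⟨T, hT, hrefl T⟩
  exact ⟨m, ⟨hm1, fun T' hT' h => hmin T' ⟨hT', htrans _ _ _ h.1 hm2⟩ h⟩, hm2⟩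

/-- Under the upper-bound and maximizer properties, for every `S`
the frontier of `S` is nonempty and satisfies the matroid basis-exchange axiom,
hence it forms the collection of bases of a matroid with ground set `S`. -/
theorem stmt3 {α : Type*} [Fintype α] [Nonempty α] [DecidableEq α]
    (q : ℕ) (hq : 0 < q)
    (pref : Finset α → Finset α → Prop)
    (hrefl : ∀ A : Finset α, pref A A)
    (htrans : ∀ A B C : Finset α, pref A B → pref B C → pref A C)
    (hub : upperBoundProperty pref q)
    (hmax : maximizerProperty pref q) :
    ∀ S : Finset α, (frontierSet pref q S).Nonempty ∧
      ∀ B ∈ frontierSet pref q S, ∀ B' ∈ frontierSet pref q S, ∀ b ∈ B \ B',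
        ∃ b' ∈ B' \ B, (B.erase b ∪ {b'}) ∈ frontierSet pref q S := by
  intro S
  constructor
  · obtain ⟨T, hT, hc⟩ := exists_subset_card_eq (Nat.min_le_right q S.card)
    obtain ⟨T', h, _⟩ := exists_frontier_above q pref hrefl htrans S T ⟨hT, hc⟩
    exact ⟨T', h⟩
  rcases le_total S.card q with hS | hS
  · intro B hB B' hB' b hb
    have key : ∀ A ∈ frontierSet pref q S, A = S := fun A hA =>
      eq_of_subset_of_card_le hA.1.1 (by rw [hA.1.2, min_eq_right hS])
    rw [key B hB, key B' hB'] at hb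
    simp at hb
  have hcard : ∀ A ∈ frontierSet pref q S, A.card = q := fun A hA => by
    rw [hA.1.2, min_eq_left hS]
  have hsub : ∀ A ∈ frontierSet pref q S, ∀ A' ∈ frontierSet pref q S,
      ∀ C ∈ NW q (A ∪ A'), C ∈ NW q S := by
    intro A hA A' hA' C hC
    refine ⟨hC.1.trans (union_subset hA.1.1 hA'.1.1), ?_⟩
    have h1 := card_le_card (subset_union_left : A ⊆ A ∪ A')
    rw [hcard A hA] at h1
    rw [hC.2, min_eq_left h1, min_eq_left hS]
  have hcomp : ∀ A ∈ frontierSet pref q S, ∀ A' ∈ frontierSet pref q S, pref A A' := by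
    intro A hA A' hA'
    by_contra hn
    by_cases h' : pref A' A
    · exact hA.2 A' hA'.1 ⟨h', hn⟩
    · obtain ⟨C, hC, h | h⟩ := hub A A' (hcard A hA) (hcard A' hA') ⟨hn, h'⟩
      · exact hA.2 C (hsub A hA A' hA' C hC) h
      · exact hA'.2 C (hsub A hA A' hA' C hC) h
  have htop : ∀ A ∈ frontierSet pref q S, ∀ C ∈ NW q S, pref A C := by
    intro A hA C hC
    obtain ⟨T, hT, h⟩ := exists_frontier_above q pref hrefl htrans S C hC
    exact htrans _ _ _ (hcomp A hA T hT) h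
  have hswap : ∀ A ∈ frontierSet pref q S, ∀ A' ∈ frontierSet pref q S,
      ∀ s ∈ A \ A', ∀ s' ∈ A' \ A, indiffPref pref (A.erase s ∪ {s'}) A →
      (A.erase s ∪ {s'}) ∈ frontierSet pref q S := by
    intro A hA A' hA' s hs s' hs' hi
    rw [mem_sdiff] at hs hs'
    refine ⟨⟨union_subset ((erase_subset _ _).trans hA.1.1)
      (singleton_subset_iff.2 (hA'.1.1 hs'.1)), ?_⟩, ?_⟩
    · rw [card_union_of_disjoint, card_erase_of_mem hs.1, card_singleton, ← hA.1.2]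
      · have := card_pos.2 ⟨s, hs.1⟩
        omega
      · rw [disjoint_singleton_right]
        exact fun h => hs'.2 (mem_of_mem_erase h)
    · intro T hT h
      exact h.2 (htrans _ _ _ hi.1 (htop A hA T hT))
  intro B hB B' hB'
  refine weak_exchange (frontierSet pref q S) ?_ _ B hB B' hB' le_rfl
  intro A hA A' hA' hne
  obtain ⟨s, hs, s', hs', h1, h2⟩ := hmax A A' hne (hcard A hA) (hcard A' hA')
    (fun C hC => ⟨htop A hA C (hsub A hA A' hA' C hC), htop A' hA' C (hsub A hA A' hA' C hC)⟩)
  exact ⟨s, hs, s', hs', hswap A hA A' hA' s hs s' hs' h1, hswap A' hA' A hA s' hs' s hs h2⟩
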